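/- arXiv:1801.09169 — 3 statements merged into one kernel-verified Lean document; each statement's English description precedes it below -/
import Mathlib

section
/- Let Λ = KQ/I be a basic finite-dimensional algebra over an algebraically closed field K and let d be a dimension vector. Then the maps Rep_d(Λ) → Seq(d) given by x ↦ S(M_x) (radical layering) and x ↦ S*(M_x) (socle layering) are both upper semicontinuous with respect to the dominance order on Seq(d): for every S ∈ Seq(d), the sets {x ∈ Rep_d(Λ) : S(M_x) ≥ S} and {x ∈ Rep_d(Λ) : S*(M_x) ≥ S} are Zariski-closed. -/
open Finset

/-! # Varieties of representations of a quiver with relations: basic setup -/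

/-- The Zariski topology on the affine space `ι → K`: it is generated by the basic open
sets `D(p) = {x | p(x) ≠ 0}`, where `p` ranges over multivariate polynomials. -/
def zariskiTopology (ι K : Type) [CommSemiring K] : TopologicalSpace (ι → K) :=
  TopologicalSpace.generateFrom
    {U | ∃ p : MvPolynomial ι K, U = {x | MvPolynomial.eval x p ≠ 0}}

/-- A finite quiver `Q`: vertices `Fin n`, arrows `Fin numArrows` with source and
target maps. -/
structure QuiverData where
  n : ℕ
  numArrows : ℕ
  src : Fin numArrows → Fin n
  tgt : Fin numArrows → Fin n

namespace QuiverData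

variable (Q : QuiverData) (d : Fin Q.n → ℕ) (K : Type) [Field K]

/-- Index of the coordinates of the affine space of `d`-dimensional representations:
for each arrow `a` a matrix entry index in `Fin (d (tgt a)) × Fin (d (src a))`. -/
abbrev Coords := Σ a : Fin Q.numArrows, Fin (d (Q.tgt a)) × Fin (d (Q.src a))

/-- The affine space of `d`-dimensional representations of `Q`:
a point `x` assigns to each arrow `a` a `d (tgt a) × d (src a)` matrix over `K`. -/
abbrev RepSpace := Coords Q d → K

/-- `RepSpace` carries the Zariski topology. -/
noncomputable instance instRepTop : TopologicalSpace (RepSpace Q d K) :=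
  zariskiTopology (Coords Q d) K

/-- The underlying `K`-vector space `⊕ᵢ K^{dᵢ}` of any `d`-dimensional representation. -/
abbrev Carrier := (Σ i : Fin Q.n, Fin (d i)) → K

/-- The projection onto the component of the `i`-th vertex (action of the primitive
idempotent `eᵢ`). -/
def proj (i : Fin Q.n) : Carrier Q d K →ₗ[K] Carrier Q d K where
  toFun m := fun jv => if jv.1 = i then m jv else 0
  map_add' u v := by
    funext jv; by_cases h : jv.1 = i <;> simp [h]
  map_smul' c u := by
    funext jv; by_cases h : jv.1 = i <;> simp [h]

/-- The action of the arrow `a` on the carrier space of the representation `x`. -/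
noncomputable def arrowMap (x : RepSpace Q d K) (a : Fin Q.numArrows) :
    Carrier Q d K →ₗ[K] Carrier Q d K where
  toFun m := fun jv =>
    if h : jv.1 = Q.tgt a then
      ∑ w : Fin (d (Q.src a)), x ⟨a, (Fin.cast (congrArg d h) jv.2, w)⟩ * m ⟨Q.src a, w⟩
    else 0
  map_add' u v := by
    funext jv
    by_cases h : jv.1 = Q.tgt a <;> simp [h, mul_add, Finset.sum_add_distrib]
  map_smul' c u := by
    funext jv
    by_cases h : jv.1 = Q.tgt a <;>
      simp [h, Finset.mul_sum, mul_comm, mul_left_comm, mul_assoc]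

/-- The action of a word `w = [a_k, …, a_1]` of arrows on the representation `x`
(the arrow `a_1` acts first; non-composable words act as `0`). -/
noncomputable def wordMap (x : RepSpace Q d K) (w : List (Fin Q.numArrows)) :
    Module.End K (Carrier Q d K) :=
  (w.map fun a => (arrowMap Q d K x a : Module.End K (Carrier Q d K))).prod

/-- The submodule `J^l · M_x` of the module `M_x`: the sum of the images of all words of
arrows of length `l` (for an admissible ideal, the radical acts through the arrows). -/
noncomputable def radPow (x : RepSpace Q d K) (l : ℕ) : Submodule K (Carrier Q d K) :=
  ⨆ w : {w : List (Fin Q.numArrows) // w.length = l},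
    LinearMap.range (wordMap Q d K x w.1)

/-- The socle series of `M_x`: `socPow x l = soc_l(M_x)`. -/
noncomputable def socPow (x : RepSpace Q d K) : ℕ → Submodule K (Carrier Q d K)
  | 0 => ⨅ a, LinearMap.ker (arrowMap Q d K x a)
  | (l+1) => ⨅ a, (socPow x l).comap (arrowMap Q d K x a)

/-- The dimension, at the vertex `i`, of a (vertex-graded) subspace `N`. -/
noncomputable def vdim (N : Submodule K (Carrier Q d K)) (i : Fin Q.n) : ℕ :=
  Module.finrank K (N.map (proj Q d K i))

/-- The radical layering `S(M_x) = (M/JM, JM/J²M, …, J^L M/J^{L+1} M)` of the module `M_x`,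
recorded through the dimension vectors of its semisimple layers. -/
noncomputable def radLayering (L : ℕ) (x : RepSpace Q d K) :
    Fin (L+1) → Fin Q.n → ℕ :=
  fun l i => vdim Q d K (radPow Q d K x l) i - vdim Q d K (radPow Q d K x (l+1)) i

/-- The socle layering `S*(M_x) = (soc₀M, soc₁M/soc₀M, …)` of the module `M_x`, recorded
through the dimension vectors of its semisimple layers. -/
noncomputable def socLayering (L : ℕ) (x : RepSpace Q d K) :
    Fin (L+1) → Fin Q.n → ℕ :=
  fun l i => vdim Q d K (socPow Q d K x l) i -
    (if (l : ℕ) = 0 then 0 else vdim Q d K (socPow Q d K x ((l : ℕ) - 1)) i)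

end QuiverData

/-- The dominance order on semisimple sequences (recorded as sequences of dimension
vectors): `dominates S S'` means `S ≤ S'`, i.e. `⊕_{j≤l} S_j ⊆ ⊕_{j≤l} S'_j` for all `l`. -/
def dominates {n L : ℕ} (S S' : Fin (L+1) → Fin n → ℕ) : Prop :=
  ∀ (l : Fin (L+1)) (i : Fin n),
    ∑ j ∈ Finset.univ.filter (fun j => j ≤ l), S j i ≤
      ∑ j ∈ Finset.univ.filter (fun j => j ≤ l), S' j i

/-- A semisimple sequence has dimension vector `d` if its layers' dimension vectors sum
to `d`. -/
def hasDimVec {n L : ℕ} (S : Fin (L+1) → Fin n → ℕ) (d : Fin n → ℕ) : Prop :=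
  ∀ i, ∑ l, S l i = d i

namespace QuiverData

variable (Q : QuiverData) (d : Fin Q.n → ℕ) (K : Type) [Field K]

/-- Evaluation of a formal noncommutative polynomial in the vertices (`Sum.inl`) and
arrows (`Sum.inr`) of `Q` on the representation `x`; an element of the path algebra `KQ`
is represented by such a polynomial. -/
noncomputable def evalRel (x : RepSpace Q d K) :
    FreeAlgebra K (Fin Q.n ⊕ Fin Q.numArrows) →ₐ[K] Module.End K (Carrier Q d K) :=
  FreeAlgebra.lift K
    (Sum.elim (fun i => (proj Q d K i : Module.End K (Carrier Q d K)))
      (fun a => (arrowMap Q d K x a : Module.End K (Carrier Q d K))))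

/-- The affine variety `Rep_d(Λ)` for `Λ = KQ/I`, where the ideal `I` is generated by the
set `R` of relations: the set of points of `RepSpace` annihilating every relation. -/
def RepVar (R : Set (FreeAlgebra K (Fin Q.n ⊕ Fin Q.numArrows))) :
    Set (RepSpace Q d K) :=
  {x | ∀ r ∈ R, evalRel Q d K x r = 0}

/-- The affine variety `Rep_d(Λ)` for the truncated path algebra
`Λ = KQ/⟨all paths of length L+1⟩`. -/
def TruncRepVar (L : ℕ) : Set (RepSpace Q d K) :=
  {x | ∀ w : List (Fin Q.numArrows), w.length = L + 1 → wordMap Q d K x w = 0}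

/-- A submodule of `M_x`, i.e. a subspace stable under the arrows and the vertex
idempotents. -/
def Stable (x : RepSpace Q d K) (N : Submodule K (Carrier Q d K)) : Prop :=
  (∀ a, N.map (arrowMap Q d K x a) ≤ N) ∧ ∀ i, N.map (proj Q d K i) ≤ N

/-- A submodule `N` of `M_x` is indecomposable (as a module). -/
def IndecompSub (x : RepSpace Q d K) (N : Submodule K (Carrier Q d K)) : Prop :=
  N ≠ ⊥ ∧ ∀ N₁ N₂ : Submodule K (Carrier Q d K),
    Stable Q d K x N₁ → Stable Q d K x N₂ → N₁ ≤ N → N₂ ≤ N →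
    N₁ ⊔ N₂ = N → N₁ ⊓ N₂ = ⊥ → N₁ = ⊥ ∨ N₂ = ⊥

/-- The module `M_x` is indecomposable. -/
def IndecompRep (x : RepSpace Q d K) : Prop :=
  IndecompSub Q d K x ⊤

/-- The module `M_x` is uniserial: its submodules form a chain. -/
def UniserialRep (x : RepSpace Q d K) : Prop :=
  ∀ N₁ N₂ : Submodule K (Carrier Q d K),
    Stable Q d K x N₁ → Stable Q d K x N₂ → N₁ ≤ N₂ ∨ N₂ ≤ N₁

/-- `M_x` decomposes as a direct sum of `s` indecomposable submodules whose dimension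
vectors are `D 0, …, D (s-1)`. -/
def DecompWith (x : RepSpace Q d K) (s : ℕ) (D : Fin s → Fin Q.n → ℕ) : Prop :=
  ∃ N : Fin s → Submodule K (Carrier Q d K),
    (∀ r, Stable Q d K x (N r)) ∧
    (∀ r, Disjoint (N r) (⨆ t, ⨆ (_ : t ≠ r), N t)) ∧
    (⨆ r, N r) = ⊤ ∧
    (∀ r, IndecompSub Q d K x (N r)) ∧
    ∀ r i, vdim Q d K (N r) i = D r i

/-- A homomorphism of representations `M_x → M_y` (for possibly different dimension
vectors): a linear map commuting with the arrow actions and the vertex projections. -/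
def RepHom (dx dy : Fin Q.n → ℕ) (x : RepSpace Q dx K) (y : RepSpace Q dy K)
    (φ : Carrier Q dx K →ₗ[K] Carrier Q dy K) : Prop :=
  (∀ a, φ ∘ₗ arrowMap Q dx K x a = arrowMap Q dy K y a ∘ₗ φ) ∧
  ∀ i, φ ∘ₗ proj Q dx K i = proj Q dy K i ∘ₗ φ

/-- The submodule `N` of `M_x` is isomorphic, as a representation, to `M_y`. -/
def SubrepIso (dy : Fin Q.n → ℕ) (x : RepSpace Q d K)
    (N : Submodule K (Carrier Q d K)) (y : RepSpace Q dy K) : Prop :=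
  ∃ φ : Carrier Q d K →ₗ[K] Carrier Q dy K,
    N ⊓ LinearMap.ker φ = ⊥ ∧ N.map φ = ⊤ ∧
    (∀ a, ∀ m ∈ N, φ (arrowMap Q d K x a m) = arrowMap Q dy K y a (φ m)) ∧
    (∀ i, ∀ m ∈ N, φ (proj Q d K i m) = proj Q dy K i (φ m))

/-- The representations `M_x` and `M_y` are isomorphic; the isomorphism classes are
exactly the orbits of the `GL(d)`-action. -/
def IsoRep (x y : RepSpace Q d K) : Prop :=
  ∃ φ : Carrier Q d K ≃ₗ[K] Carrier Q d K,
    (∀ a m, φ (arrowMap Q d K x a m) = arrowMap Q d K y a (φ m)) ∧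
    ∀ i m, φ (proj Q d K i m) = proj Q d K i (φ m)

/-- The `GL(d)`-orbit of the point `x`, i.e. the set of points encoding modules
isomorphic to `M_x`. -/
def orbitSet (x : RepSpace Q d K) : Set (RepSpace Q d K) :=
  {y | IsoRep Q d K x y}

/-- Given a family `P` of varieties `Rep_dv(Λ)` (one for every dimension vector `dv`),
`Ext¹_Λ(M_x, M_y) = 0`: every extension `0 → M_y → E → M_x → 0` of `Λ`-modules splits. -/
def Ext1Zero (P : ∀ dv : Fin Q.n → ℕ, Set (RepSpace Q dv K))
    (dx dy : Fin Q.n → ℕ) (x : RepSpace Q dx K) (y : RepSpace Q dy K) : Prop :=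
  ∀ z ∈ P (fun i => dx i + dy i),
    ∀ (ι : Carrier Q dy K →ₗ[K] Carrier Q (fun i => dx i + dy i) K)
      (π : Carrier Q (fun i => dx i + dy i) K →ₗ[K] Carrier Q dx K),
      RepHom Q K dy (fun i => dx i + dy i) y z ι →
      RepHom Q K (fun i => dx i + dy i) dx z x π →
      Function.Injective ι → Function.Surjective π →
      LinearMap.ker π = LinearMap.range ι →
      ∃ σ : Carrier Q dx K →ₗ[K] Carrier Q (fun i => dx i + dy i) K,
        RepHom Q K dx (fun i => dx i + dy i) x z σ ∧ π ∘ₗ σ = LinearMap.id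

/-- The direct sum `C₁ ⊕ ⋯ ⊕ C_s` of subvarieties `C_r ⊆ Rep_{D r}(Λ)`: the set of
points `x ∈ Rep_d(Λ)` whose module decomposes as `M_x ≅ ⊕_r M^{(r)}` with `M^{(r)}`
encoded by a point of `C_r`. -/
def DirectSumSet (s : ℕ) (D : Fin s → Fin Q.n → ℕ)
    (Cs : ∀ r : Fin s, Set (RepSpace Q (D r) K)) : Set (RepSpace Q d K) :=
  {x | ∃ N : Fin s → Submodule K (Carrier Q d K),
    (∀ r, Stable Q d K x (N r)) ∧
    (∀ r, Disjoint (N r) (⨆ t, ⨆ (_ : t ≠ r), N t)) ∧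
    (⨆ r, N r) = ⊤ ∧
    ∀ r, ∃ y ∈ Cs r, SubrepIso Q d K (D r) x (N r) y}

/-- The endomorphism space `End_Λ(M_x)` of the module `M_x`. -/
def endSpace (x : RepSpace Q d K) :
    Submodule K (Carrier Q d K →ₗ[K] Carrier Q d K) where
  carrier := {φ | RepHom Q K d d x x φ}
  add_mem' := by
    intro φ ψ hφ hψ
    exact ⟨fun a => by rw [LinearMap.add_comp, LinearMap.comp_add, hφ.1 a, hψ.1 a],
      fun i => by rw [LinearMap.add_comp, LinearMap.comp_add, hφ.2 i, hψ.2 i]⟩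
  zero_mem' := by
    exact ⟨fun a => by simp, fun i => by simp⟩
  smul_mem' := by
    intro c φ hφ
    exact ⟨fun a => by rw [LinearMap.smul_comp, LinearMap.comp_smul, hφ.1 a],
      fun i => by rw [LinearMap.smul_comp, LinearMap.comp_smul, hφ.2 i]⟩

/-- A word of arrows is a (composable) path when read in function-composition order. -/
def IsPathWord (w : List (Fin Q.numArrows)) : Prop :=
  List.Chain' (fun a b => Q.src a = Q.tgt b) w

/-- The quiver `Q` has no oriented cycles. -/
def Acyclic : Prop :=
  ∀ (a : Fin Q.numArrows) (w : List (Fin Q.numArrows)),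
    IsPathWord Q (a :: w) →
      Q.tgt a ≠ Q.src ((a :: w).getLast (List.cons_ne_nil a w))

/-- A filtration `M_x = F 0 ⊇ F 1 ⊇ ⋯ ⊇ F (L+1) = 0` by submodules which is governed by
the semisimple sequence `S`: each layer `F l / F (l+1)` is semisimple, isomorphic to `S l`. -/
def Governed (L : ℕ) (x : RepSpace Q d K) (S : Fin (L+1) → Fin Q.n → ℕ)
    (F : Fin (L+2) → Submodule K (Carrier Q d K)) : Prop :=
  F 0 = ⊤ ∧ F (Fin.last (L+1)) = ⊥ ∧
  (∀ l : Fin (L+1), F l.succ ≤ F l.castSucc) ∧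
  (∀ (l : Fin (L+2)) (i : Fin Q.n), (F l).map (proj Q d K i) ≤ F l) ∧
  (∀ (l : Fin (L+1)) (a : Fin Q.numArrows),
      (F l.castSucc).map (arrowMap Q d K x a) ≤ F l.succ) ∧
  ∀ (l : Fin (L+1)) (i : Fin Q.n),
      vdim Q d K (F l.castSucc) i = S l i + vdim Q d K (F l.succ) i

/-- `Filt S`: the set of points whose module has a filtration governed by `S`. -/
def FiltSet (L : ℕ) (S : Fin (L+1) → Fin Q.n → ℕ) : Set (RepSpace Q d K) :=
  {x | ∃ F, Governed Q d K L x S F}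

/-- `Γ(M_x)`: the number of semisimple sequences which are realizable (i.e. occur as the
radical layering of a module in the variety `P`) and which govern some filtration of `M_x`. -/
noncomputable def gammaCount (L : ℕ) (P : Set (RepSpace Q d K))
    (x : RepSpace Q d K) : ℕ :=
  Set.ncard {S : Fin (L+1) → Fin Q.n → ℕ |
    (∃ y ∈ P, radLayering Q d K L y = S) ∧ ∃ F, Governed Q d K L x S F}

/-- `Sstar` is the generic (= minimal, attained) socle layering of the modules in `W`. -/
def GenSoc (L : ℕ) (W : Set (RepSpace Q d K))
    (Sstar : Fin (L+1) → Fin Q.n → ℕ) : Prop :=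
  (∀ x ∈ W, dominates Sstar (socLayering Q d K L x)) ∧
  ∃ x ∈ W, socLayering Q d K L x = Sstar

end QuiverData

namespace QuiverData

variable (Q : QuiverData)

/-- The `i`-th entry of the row vector `e·A` (over `ℤ`), where `A` is the adjacency
matrix of `Q`: the sum of `e (src a)` over all arrows `a` ending at `i`. -/
def inflowZ (e : Fin Q.n → ℤ) (i : Fin Q.n) : ℤ :=
  ∑ a ∈ Finset.univ.filter (fun a => Q.tgt a = i), e (Q.src a)

/-- The `i`-th entry of the row vector `e·B` (over `ℤ`), where `B` is the transpose of
the adjacency matrix of `Q`. -/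
def outflowZ (e : Fin Q.n → ℤ) (i : Fin Q.n) : ℤ :=
  ∑ a ∈ Finset.univ.filter (fun a => Q.src a = i), e (Q.tgt a)

/-- Partial sums `t⁽⁰⁾ + ⋯ + t⁽ˡ⁾` of the recursion
`t⁽⁰⁾ = sup{0, d − d·A}`, `t⁽ˡ⁺¹⁾ = sup{0, (d − ∑_{k≤l} t⁽ᵏ⁾) − (d − ∑_{k≤l} t⁽ᵏ⁾)·A}`
(computed componentwise). -/
def cumLayer (dz : Fin Q.n → ℤ) : ℕ → Fin Q.n → ℤ
  | 0 => fun i => max 0 (dz i - inflowZ Q dz i)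
  | (l+1) => fun i =>
      cumLayer dz l i +
        max 0 ((dz i - cumLayer dz l i) -
          inflowZ Q (fun j => dz j - cumLayer dz l j) i)

/-- The positive part `∑ᵢ eᵢ fᵢ` of the Euler form of `Q`. -/
def eulerHomPart (e f : Fin Q.n → ℕ) : ℕ := ∑ i, e i * f i

/-- The negative part `∑_{α} e_{src α} f_{tgt α}` of the Euler form of `Q`, so that
`⟨e, f⟩ = eulerHomPart e f − eulerExtPart e f`. -/
def eulerExtPart (e f : Fin Q.n → ℕ) : ℕ :=
  ∑ a, e (Q.src a) * f (Q.tgt a)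

end QuiverData

/-- The quiver with a single vertex and `r` loops. -/
def QuiverData.loopQuiver (r : ℕ) : QuiverData :=
  ⟨1, r, fun _ => 0, fun _ => 0⟩

namespace QuiverData

variable (Q : QuiverData) (d : Fin Q.n → ℕ) (K : Type) [Field K]

/-- The variety `Rep_d(Λ)` for `Λ = KQ/⟨Rels⟩`, regarded as a topological space with the
(subspace) Zariski topology. -/
abbrev GenV (Rels : Set (FreeAlgebra K (Fin Q.n ⊕ Fin Q.numArrows))) :=
  {y : RepSpace Q d K // y ∈ RepVar Q d K Rels}

/-- The variety `Rep_d(Λ)` for the truncated path algebra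
`Λ = KQ/⟨paths of length L+1⟩`, regarded as a topological space. -/
abbrev TruncV (L : ℕ) := {y : RepSpace Q d K // y ∈ TruncRepVar Q d K L}

end QuiverData

/-!
In both layerings the layers telescope: at the vertex `i`, the first `l + 1` radical layers add up
to `d i - dim e_i J^{l+1} M_x` and the first `l + 1` socle layers to `dim e_i soc_l M_x`. Now
`e_i J^{l+1} M_x` is the image of the linear map that applies `e_i` to sums of words of length
`l + 1`, while `e_i soc_l M_x = e_i M_x ∩ soc_l M_x` is the common kernel of these words on
`e_i M_x`. The entries of both maps are polynomials in `x`, and the rank of such a map is lower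
semicontinuous for the Zariski topology, because `rank ≥ r` means that some minor of size `r` does
not vanish.
-/

section LinearAlgebra

open Module

theorem range_lsum {R M ι : Type*} {V : ι → Type*} [CommSemiring R] [AddCommMonoid M]
    [Module R M] [∀ i, AddCommMonoid (V i)] [∀ i, Module R (V i)] [Fintype ι] [DecidableEq ι]
    (f : ∀ i, V i →ₗ[R] M) :
    LinearMap.range (LinearMap.lsum R V R f) = ⨆ i, LinearMap.range (f i) := by
  rw [LinearMap.range_eq_map, ← LinearMap.iSup_range_single, Submodule.map_iSup]
  refine iSup_congr fun i ↦ ?_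
  rw [← LinearMap.range_comp]
  congr 1
  exact LinearMap.ext fun v ↦ LinearMap.lsum_piSingle R V R f i v

theorem map_eq_inf_range {R M : Type*} [Semiring R] [AddCommMonoid M] [Module R M]
    {e : End R M} (he : IsIdempotentElem e) {N : Submodule R M} (hN : N ≤ N.comap e) :
    N.map e = N ⊓ LinearMap.range e := by
  refine le_antisymm (le_inf (Submodule.map_le_iff_le_comap.2 hN) LinearMap.map_le_range) ?_
  rintro _ ⟨hv, w, rfl⟩
  exact ⟨e w, hv, LinearMap.congr_fun he w⟩

variable {K V W : Type*} [Field K] [AddCommGroup V] [Module K V] [AddCommGroup W] [Module K W]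

theorem exists_dual_of_linearIndependent {ι : Type*} [DecidableEq ι] {w : ι → W}
    (hw : LinearIndependent K w) :
    ∃ φ : ι → Dual K W, ∀ i j, φ i (w j) = if i = j then 1 else 0 := by
  obtain ⟨g, hg⟩ := LinearMap.exists_leftInverse_of_injective (Finsupp.linearCombination K w)
    (LinearMap.ker_eq_bot.2 hw)
  refine ⟨fun i ↦ Finsupp.lapply i ∘ₗ g, fun i j ↦ ?_⟩
  have hgw : g (w j) = Finsupp.single j 1 := by
    simpa using LinearMap.congr_fun hg (Finsupp.single j 1)
  simp [hgw, Finsupp.single_apply, eq_comm]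

theorem le_finrank_range_iff_exists_det_ne_zero [FiniteDimensional K W] {T : V →ₗ[K] W} {r : ℕ} :
    r ≤ finrank K (LinearMap.range T) ↔ ∃ (φ : Fin r → Dual K W) (v : Fin r → V),
      (Matrix.of fun i j ↦ φ i (T (v j))).det ≠ 0 := by
  constructor
  · intro hr
    obtain ⟨w, hw⟩ := exists_linearIndependent_of_le_finrank hr
    choose v hv using fun j ↦ (w j).2
    obtain ⟨φ, hφ⟩ := exists_dual_of_linearIndependent (hw.map' _ (Submodule.ker_subtype _))
    refine ⟨φ, v, ?_⟩
    have hone : (Matrix.of fun i j ↦ φ i (T (v j))) = 1 := by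
      ext i j
      simpa [hv, Matrix.one_apply] using hφ i j
    simp [hone]
  · rintro ⟨φ, v, hdet⟩
    have hcols : LinearIndependent K (LinearMap.pi φ ∘ (LinearMap.range T).subtype ∘
        fun j ↦ T.rangeRestrict (v j)) :=
      Matrix.linearIndependent_cols_of_det_ne_zero hdet
    simpa using ((hcols.of_comp _).of_comp _).fintype_card_le_finrank

end LinearAlgebra

section MatrixCoefficients

open Module

theorem det_mem_subalgebra {R S n : Type*} [CommRing R] [CommRing S] [Algebra R S] [Fintype n]
    [DecidableEq n] {A : Subalgebra R S} {M : Matrix n n S} (hM : ∀ i j, M i j ∈ A) :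
    M.det ∈ A := by
  rw [Matrix.det_apply]
  exact sum_mem fun σ _ ↦ zsmul_mem (prod_mem fun i _ ↦ hM _ _) _

variable {X K U V W : Type*} [Field K] [AddCommGroup U] [Module K U] [AddCommGroup V] [Module K V]
  [AddCommGroup W] [Module K W] {A : Subalgebra K (X → K)}

/-- All matrix coefficients `x ↦ φ (T x v)` of the family of linear maps `T` belong to the function
algebra `A`. For finite-dimensional `V` and `W` this says that the entries of `T x` in some (hence
any) pair of bases are functions in `A`, but no basis has to be chosen. -/
def MatrixCoeffsIn (A : Subalgebra K (X → K)) (T : X → V →ₗ[K] W) : Prop :=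
  ∀ (φ : Dual K W) (v : V), (fun x ↦ φ (T x v)) ∈ A

namespace MatrixCoeffsIn

theorem const (T : V →ₗ[K] W) : MatrixCoeffsIn A fun _ ↦ T :=
  fun φ v ↦ A.algebraMap_mem (φ (T v))

theorem sum {ι : Type*} {s : Finset ι} {T : ι → X → V →ₗ[K] W}
    (hT : ∀ i ∈ s, MatrixCoeffsIn A (T i)) : MatrixCoeffsIn A fun x ↦ ∑ i ∈ s, T i x := by
  intro φ v
  simpa [Finset.sum_fn] using A.sum_mem fun i hi ↦ hT i hi φ v

theorem comp [FiniteDimensional K V] {S : X → V →ₗ[K] W} {T : X → U →ₗ[K] V}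
    (hS : MatrixCoeffsIn A S) (hT : MatrixCoeffsIn A T) :
    MatrixCoeffsIn A fun x ↦ S x ∘ₗ T x := by
  intro φ u
  let b := finBasis K V
  have expand (x : X) : φ (S x (T x u)) = ∑ k, b.coord k (T x u) * φ (S x (b k)) := by
    conv_lhs => rw [← b.sum_repr (T x u)]
    simp only [map_sum, map_smul, smul_eq_mul, b.coord_apply]
  simp only [LinearMap.comp_apply, expand]
  simpa [Finset.sum_fn] using
    A.sum_mem fun k (_ : k ∈ Finset.univ) ↦ A.mul_mem (hT (b.coord k) u) (hS φ (b k))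

theorem of_apply {κ : Type*} [Finite κ] {T : X → V →ₗ[K] κ → K}
    (hT : ∀ v k, (fun x ↦ T x v k) ∈ A) : MatrixCoeffsIn A T := by
  have := Fintype.ofFinite κ
  classical
  intro φ v
  have expand (x : X) : φ (T x v) = ∑ k, T x v k * φ fun j ↦ if k = j then 1 else 0 :=
    LinearMap.pi_apply_eq_sum_univ φ (T x v)
  simp only [expand]
  simpa [Finset.sum_fn] using
    A.sum_mem fun k (_ : k ∈ Finset.univ) ↦ A.mul_mem (hT v k) (A.algebraMap_mem (φ _))

theorem lsum {ι : Type*} [Fintype ι] [DecidableEq ι] [FiniteDimensional K V]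
    {T : ι → X → V →ₗ[K] W} (hT : ∀ i, MatrixCoeffsIn A (T i)) :
    MatrixCoeffsIn A fun x ↦ LinearMap.lsum K (fun _ ↦ V) K fun i ↦ T i x := by
  simp only [LinearMap.lsum_apply]
  exact sum fun i _ ↦ (hT i).comp (const _)

theorem pi {ι : Type*} [Finite ι] [FiniteDimensional K W]
    {T : ι → X → V →ₗ[K] W} (hT : ∀ i, MatrixCoeffsIn A (T i)) :
    MatrixCoeffsIn A fun x ↦ LinearMap.pi fun i ↦ T i x := by
  have := Fintype.ofFinite ι
  classical
  have hpi (x : X) : LinearMap.pi (fun i ↦ T i x) =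
      ∑ i, LinearMap.single K (fun _ ↦ W) i ∘ₗ T i x := by
    ext v j
    simp [Pi.single_apply]
  simp only [hpi]
  exact sum fun i _ ↦ (const _).comp (hT i)

variable [TopologicalSpace X] [FiniteDimensional K W] {T : X → V →ₗ[K] W}

theorem lowerSemicontinuous_finrank_range (hT : MatrixCoeffsIn A T)
    (hA : ∀ f ∈ A, IsOpen (Function.support f)) :
    LowerSemicontinuous fun x ↦ finrank K (LinearMap.range (T x)) := by
  refine lowerSemicontinuous_iff_isOpen_preimage.2 fun r ↦ ?_
  have hminors : (fun x ↦ finrank K (LinearMap.range (T x))) ⁻¹' Set.Ioi r =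
      ⋃ (φ : Fin (r + 1) → Dual K W) (v : Fin (r + 1) → V),
        Function.support (Matrix.of fun i j x ↦ φ i (T x (v j))).det := by
    ext x
    simp only [Set.mem_preimage, Set.mem_Ioi, ← Nat.succ_le_iff,
      le_finrank_range_iff_exists_det_ne_zero, Set.mem_iUnion, Function.mem_support]
    refine exists_congr fun φ ↦ exists_congr fun v ↦ not_congr (Eq.congr_left ?_)
    exact ((Pi.evalRingHom (fun _ : X ↦ K) x).map_det
      (Matrix.of fun i j x ↦ φ i (T x (v j)))).symm
  rw [hminors]
  exact isOpen_iUnion fun φ ↦ isOpen_iUnion fun v ↦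
    hA _ (det_mem_subalgebra fun i j ↦ hT (φ i) (v j))

theorem upperSemicontinuous_finrank_ker [FiniteDimensional K V] (hT : MatrixCoeffsIn A T)
    (hA : ∀ f ∈ A, IsOpen (Function.support f)) :
    UpperSemicontinuous fun x ↦ finrank K (LinearMap.ker (T x)) := by
  have hker (x : X) : finrank K (LinearMap.ker (T x)) =
      finrank K V - finrank K (LinearMap.range (T x)) :=
    Nat.eq_sub_of_add_eq' (T x).finrank_range_add_finrank_ker
  simp only [hker]
  exact continuous_of_discreteTopology.comp_lowerSemicontinuous_antitone
    (hT.lowerSemicontinuous_finrank_range hA) antitone_const_tsub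

end MatrixCoeffsIn

end MatrixCoefficients

section PolynomialFunctions

open scoped Topology

/-- The algebra of polynomial functions on the affine space `ι → K`, generated by the coordinate
functions. -/
def mvPolynomialFunctions (ι K : Type*) [CommSemiring K] : Subalgebra K ((ι → K) → K) :=
  Algebra.adjoin K (Set.range fun i x ↦ x i)

theorem coord_mem_mvPolynomialFunctions {ι K : Type*} [CommSemiring K] (i : ι) :
    (fun x : ι → K ↦ x i) ∈ mvPolynomialFunctions ι K :=
  Algebra.subset_adjoin (Set.mem_range_self i)

theorem isOpen_support_of_mem_mvPolynomialFunctions {ι K : Type} [CommSemiring K]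
    {f : (ι → K) → K} (hf : f ∈ mvPolynomialFunctions ι K) :
    IsOpen[zariskiTopology ι K] (Function.support f) := by
  rw [mvPolynomialFunctions, Algebra.adjoin_range_eq_range_aeval] at hf
  obtain ⟨p, rfl⟩ := hf
  refine TopologicalSpace.isOpen_generateFrom_of_mem ⟨p, ?_⟩
  have heval (x : ι → K) : MvPolynomial.aeval (fun i (x : ι → K) ↦ x i) p x = p.eval x := by
    induction p using MvPolynomial.induction_on with
    | C a => simp
    | add p q hp hq => simp [hp, hq]
    | mul_X p i hp => simp [hp]
  exact Set.ext fun x ↦ not_congr (Eq.congr_left (heval x))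

end PolynomialFunctions

section Dominance

theorem sum_filter_le_eq_sum_range {M : Type*} [AddCommMonoid M] {n : ℕ} (f : ℕ → M)
    (l : Fin n) : ∑ j : Fin n with j ≤ l, f j = ∑ j ∈ range (l + 1), f j := by
  rw [filter_ge_eq_Iic, Nat.range_succ_eq_Iic, ← Fin.map_valEmbedding_Iic, sum_map]
  rfl

theorem sum_range_tsub_of_antitone {M : Type*} [AddCommMonoid M] [PartialOrder M]
    [CanonicallyOrderedAdd M] [Sub M] [OrderedSub M] [AddLeftMono M]
    {f : ℕ → M} (hf : Antitone f) (n : ℕ) :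
    ∑ j ∈ range n, (f j - f (j + 1)) = f 0 - f n := by
  induction n with
  | zero => simp
  | succ n ih =>
    rw [sum_range_succ, ih, tsub_add_tsub_cancel (hf n.zero_le) (hf n.le_succ)]

theorem isClosed_setOf_dominates {X : Type*} [TopologicalSpace X] {n L : ℕ}
    {F : X → Fin (L + 1) → Fin n → ℕ}
    (hF : ∀ l i, UpperSemicontinuous fun x ↦ ∑ j with j ≤ l, F x j i)
    (S : Fin (L + 1) → Fin n → ℕ) : IsClosed {x | dominates S (F x)} := by
  simp only [dominates, Set.ofPred_forall]
  exact isClosed_iInter fun l ↦ isClosed_iInter fun i ↦ (hF l i).isClosed_preimage _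

end Dominance

namespace QuiverData

section Layers

variable {Q : QuiverData} {d : Fin Q.n → ℕ} {K : Type} [Field K]

theorem isIdempotentElem_proj (i : Fin Q.n) :
    IsIdempotentElem (proj Q d K i : Module.End K (Carrier Q d K)) := by
  ext m j
  by_cases h : j.1 = i <;> simp [proj, h]

theorem arrowMap_proj (x : RepSpace Q d K) (a : Fin Q.numArrows) (i : Fin Q.n)
    (m : Carrier Q d K) :
    arrowMap Q d K x a (proj Q d K i m) = if Q.src a = i then arrowMap Q d K x a m else 0 := by
  by_cases h : Q.src a = i
  · simp [h, arrowMap, proj]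
  · ext j
    simp [h, arrowMap, proj]

theorem wordMap_cons (x : RepSpace Q d K) (a : Fin Q.numArrows) (w : List (Fin Q.numArrows)) :
    wordMap Q d K x (a :: w) = arrowMap Q d K x a ∘ₗ wordMap Q d K x w := by
  simp [wordMap, Module.End.mul_eq_comp]

theorem wordMap_concat (x : RepSpace Q d K) (w : List (Fin Q.numArrows)) (a : Fin Q.numArrows) :
    wordMap Q d K x (w ++ [a]) = wordMap Q d K x w ∘ₗ arrowMap Q d K x a := by
  simp [wordMap, Module.End.mul_eq_comp]

theorem vdim_mono (i : Fin Q.n) : Monotone fun N ↦ vdim Q d K N i :=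
  fun _ _ h ↦ Submodule.finrank_mono (Submodule.map_mono h)

theorem radPow_zero (x : RepSpace Q d K) : radPow Q d K x 0 = ⊤ := by
  refine top_le_iff.1 (le_iSup_of_le ⟨[], rfl⟩ ?_)
  simp [wordMap, Module.End.one_eq_id]

theorem radPow_antitone (x : RepSpace Q d K) : Antitone (radPow Q d K x) := by
  refine antitone_nat_of_succ_le fun l ↦ iSup_le ?_
  rintro ⟨w, hw⟩
  obtain rfl | ⟨v, a, rfl⟩ := w.eq_nil_or_concat
  · simp at hw
  · simp only [List.concat_eq_append, wordMap_concat]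
    exact (LinearMap.range_comp_le_range _ _).trans
      (le_iSup_of_le ⟨v, by simpa using hw⟩ le_rfl)

theorem mem_socPow_iff {x : RepSpace Q d K} {l : ℕ} {m : Carrier Q d K} :
    m ∈ socPow Q d K x l ↔ ∀ w, w.length = l + 1 → wordMap Q d K x w m = 0 := by
  induction l generalizing m with
  | zero => simp [socPow, List.length_eq_one_iff, wordMap]
  | succ l ih =>
    simp only [socPow, Submodule.mem_iInf, Submodule.mem_comap, ih]
    refine ⟨fun h w hw ↦ ?_, fun h a w hw ↦ ?_⟩
    · obtain rfl | ⟨v, a, rfl⟩ := w.eq_nil_or_concat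
      · simp at hw
      · rw [List.concat_eq_append, wordMap_concat]
        exact h a v (by simpa using hw)
    · simpa [wordMap_concat] using h (w ++ [a]) (by simp [hw])

theorem socPow_monotone (x : RepSpace Q d K) : Monotone (socPow Q d K x) := by
  refine monotone_nat_of_le_succ fun l m hm ↦ mem_socPow_iff.2 ?_
  rintro (_ | ⟨a, w⟩) hw
  · simp at hw
  · rw [wordMap_cons, LinearMap.comp_apply, mem_socPow_iff.1 hm w (by simpa using hw), map_zero]

theorem socPow_le_comap_proj (x : RepSpace Q d K) (l : ℕ) (i : Fin Q.n) :
    socPow Q d K x l ≤ (socPow Q d K x l).comap (proj Q d K i) := by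
  intro m hm
  rw [Submodule.mem_comap]
  cases l <;>
  · simp only [socPow, Submodule.mem_iInf, LinearMap.mem_ker, Submodule.mem_comap,
      arrowMap_proj] at hm ⊢
    intro a
    split_ifs
    exacts [hm a, by simp]

theorem sum_radLayering (L : ℕ) (x : RepSpace Q d K) (l : Fin (L + 1)) (i : Fin Q.n) :
    ∑ j with j ≤ l, radLayering Q d K L x j i =
      vdim Q d K ⊤ i - vdim Q d K (radPow Q d K x (l + 1)) i := by
  rw [← radPow_zero x]
  exact (sum_filter_le_eq_sum_range (fun j ↦ vdim Q d K (radPow Q d K x j) i -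
    vdim Q d K (radPow Q d K x (j + 1)) i) l).trans
    (sum_range_tsub_of_antitone ((vdim_mono i).comp_antitone (radPow_antitone x)) _)

theorem sum_socLayering (L : ℕ) (x : RepSpace Q d K) (l : Fin (L + 1)) (i : Fin Q.n) :
    ∑ j with j ≤ l, socLayering Q d K L x j i = vdim Q d K (socPow Q d K x l) i := by
  -- `f k = dim e_i soc_{k-1} M` with the convention `soc_{-1} M = 0`.
  let f (k : ℕ) : ℕ := if k = 0 then 0 else vdim Q d K (socPow Q d K x (k - 1)) i
  have hf : Monotone f := by
    refine monotone_nat_of_le_succ ?_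
    rintro (_ | k)
    · simp [f]
    · simpa [f] using vdim_mono i (socPow_monotone x k.le_succ)
  exact (sum_filter_le_eq_sum_range (fun j ↦ f (j + 1) - f j) l).trans (sum_range_tsub hf _)

end Layers

section Semicontinuity

variable (Q : QuiverData) (d : Fin Q.n → ℕ) (K : Type) [Field K]

/-- The words of length `l` in the arrows of `Q`, composable or not: the index type of the supremum
defining `radPow`. -/
abbrev Words (l : ℕ) : Type := {w : List (Fin Q.numArrows) // w.length = l}

instance (l : ℕ) : Fintype (Words Q l) :=
  inferInstanceAs (Fintype (List.Vector (Fin Q.numArrows) l))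

variable {Q d K}

theorem radPow_eq_range (x : RepSpace Q d K) (l : ℕ) : radPow Q d K x l =
    LinearMap.range (LinearMap.lsum K (fun _ ↦ Carrier Q d K) K
      fun w : Words Q l ↦ wordMap Q d K x w) :=
  (range_lsum _).symm

theorem socPow_eq_ker (x : RepSpace Q d K) (l : ℕ) : socPow Q d K x l =
    LinearMap.ker (LinearMap.pi fun w : Words Q (l + 1) ↦ wordMap Q d K x w) := by
  ext m
  simp [mem_socPow_iff, funext_iff]

theorem matrixCoeffsIn_arrowMap (a : Fin Q.numArrows) :
    MatrixCoeffsIn (mvPolynomialFunctions (Coords Q d) K) fun x ↦ arrowMap Q d K x a := by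
  refine .of_apply fun m j ↦ ?_
  by_cases h : j.1 = Q.tgt a
  · have hterm (k : Fin (d (Q.src a))) :
        (fun x : RepSpace Q d K ↦ x ⟨a, Fin.cast (congrArg d h) j.2, k⟩ * m ⟨Q.src a, k⟩) ∈
          mvPolynomialFunctions (Coords Q d) K :=
      mul_mem (coord_mem_mvPolynomialFunctions _) (Subalgebra.algebraMap_mem _ _)
    simpa [arrowMap, h, Finset.sum_fn] using sum_mem fun k (_ : k ∈ univ) ↦ hterm k
  · simp only [arrowMap, LinearMap.coe_mk, AddHom.coe_mk, h, dite_false]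
    exact Subalgebra.zero_mem _

theorem matrixCoeffsIn_wordMap (w : List (Fin Q.numArrows)) :
    MatrixCoeffsIn (mvPolynomialFunctions (Coords Q d) K) fun x ↦ wordMap Q d K x w := by
  induction w with
  | nil => exact .const 1
  | cons a w ih =>
    simp only [wordMap_cons]
    exact (matrixCoeffsIn_arrowMap a).comp ih

theorem vdim_radPow (x : RepSpace Q d K) (l : ℕ) (i : Fin Q.n) :
    vdim Q d K (radPow Q d K x l) i = Module.finrank K (LinearMap.range
      (proj Q d K i ∘ₗ LinearMap.lsum K (fun _ ↦ Carrier Q d K) K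
        fun w : Words Q l ↦ wordMap Q d K x w)) := by
  rw [vdim, radPow_eq_range, ← LinearMap.range_comp]

theorem lowerSemicontinuous_vdim_radPow (l : ℕ) (i : Fin Q.n) :
    LowerSemicontinuous fun x : RepSpace Q d K ↦ vdim Q d K (radPow Q d K x l) i := by
  simp only [vdim_radPow]
  exact (MatrixCoeffsIn.const _ |>.comp <| .lsum fun w : Words Q l ↦
    matrixCoeffsIn_wordMap w.1).lowerSemicontinuous_finrank_range fun f ↦
      isOpen_support_of_mem_mvPolynomialFunctions

theorem vdim_socPow (x : RepSpace Q d K) (l : ℕ) (i : Fin Q.n) :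
    vdim Q d K (socPow Q d K x l) i = Module.finrank K (LinearMap.ker
      (LinearMap.pi (fun w : Words Q (l + 1) ↦ wordMap Q d K x w) ∘ₗ
        (LinearMap.range (proj Q d K i)).subtype)) := by
  rw [vdim, map_eq_inf_range (isIdempotentElem_proj i) (socPow_le_comap_proj x l i), inf_comm,
    ← Submodule.map_comap_subtype, Submodule.finrank_map_subtype_eq, socPow_eq_ker,
    LinearMap.ker_comp]

theorem upperSemicontinuous_vdim_socPow (l : ℕ) (i : Fin Q.n) :
    UpperSemicontinuous fun x : RepSpace Q d K ↦ vdim Q d K (socPow Q d K x l) i := by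
  simp only [vdim_socPow]
  exact (MatrixCoeffsIn.pi (fun w : Words Q (l + 1) ↦
    matrixCoeffsIn_wordMap w.1) |>.comp <| .const _).upperSemicontinuous_finrank_ker fun f ↦
      isOpen_support_of_mem_mvPolynomialFunctions

end Semicontinuity

end QuiverData

open QuiverData in
theorem statement_0_general (K : Type) [Field K] (Q : QuiverData) (L : ℕ) (d : Fin Q.n → ℕ)
    (S : Fin (L + 1) → Fin Q.n → ℕ) :
    IsClosed {x : RepSpace Q d K | dominates S (radLayering Q d K L x)} ∧
    IsClosed {x : RepSpace Q d K | dominates S (socLayering Q d K L x)} := by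
  constructor <;> refine isClosed_setOf_dominates (fun l i ↦ ?_) S
  · simp only [sum_radLayering]
    exact continuous_of_discreteTopology.comp_lowerSemicontinuous_antitone
      (lowerSemicontinuous_vdim_radPow (l + 1) i) antitone_const_tsub
  · simp only [sum_socLayering]
    exact upperSemicontinuous_vdim_socPow l i

open QuiverData in
/-- For `Λ = KQ/I` basic finite dimensional over an algebraically closed
field `K` (with `J^{L+1} = 0`), the radical layering `x ↦ S(M_x)` and the socle layering
`x ↦ S*(M_x)` are upper semicontinuous on `Rep_d(Λ)` with respect to the dominance order:
for every `d`-dimensional semisimple sequence `S`, the sets `{x | S(M_x) ≥ S}` and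
`{x | S*(M_x) ≥ S}` are Zariski-closed in `Rep_d(Λ)`. -/
theorem statement_0 (K : Type) [Field K] [IsAlgClosed K]
    (Q : QuiverData) (L : ℕ) (d : Fin Q.n → ℕ)
    (Rels : Set (FreeAlgebra K (Fin Q.n ⊕ Fin Q.numArrows)))
    (hLoewy : ∀ x ∈ RepVar Q d K Rels, ∀ w : List (Fin Q.numArrows),
      w.length = L + 1 → wordMap Q d K x w = 0)
    (S : Fin (L+1) → Fin Q.n → ℕ) (hS : hasDimVec S d) :
    IsClosed {x : GenV Q d K Rels | dominates S (radLayering Q d K L x.1)} ∧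
    IsClosed {x : GenV Q d K Rels | dominates S (socLayering Q d K L x.1)} :=
  (statement_0_general K Q L d S).imp (·.preimage continuous_subtype_val)
    (·.preimage continuous_subtype_val)
end

section
/- Let X be a topological space, (A, ≤) a partially ordered set, and f : X → A an upper semicontinuous map whose image is well partially ordered, i.e., Img(f) contains no infinite strictly descending chain and every nonempty subset of Img(f) has only finitely many minimal elements. Then for every a ∈ A the preimages f^{-1}({b : b < a}) and f^{-1}({b : b ≤ a}) are open in X. Moreover, for every irreducible subset U of X, the set {f(x) : x ∈ U} has a minimum m, and the set {x ∈ U : f(x) = m} is a dense open subset of U (in the subspace topology); in particular the restriction of f to U is generically constant with generic value m. -/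
/-!
In a well partially ordered set every upper set is a finite union of principal up-sets, namely
those of its minimal elements. So preimages under `f` of upper sets are closed, and those of lower
sets are open. For `x, y` in an irreducible set `U`, the open sets `{f ≤ f x}` and `{f ≤ f y}` then
meet inside `U`: the image `f '' U` is downward directed, and a minimal element of it is its least
element `m`. On `U` the condition `f = m` is the same as `f ≤ m`, which is open, and a nonempty open
subset of an irreducible set is dense.

Mathlib's `UpperSemicontinuous` says instead that the sets `{f < a}` are open. For a partial order
this differs from closedness of the sets `{a ≤ f}`, the meaning of upper semicontinuity here.
-/

section Order

variable {α : Type*}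

theorem isPWO_of_isWF_of_finite_antichains [Preorder α] {s : Set α} (hwf : s.IsWF)
    (hfin : ∀ t ⊆ s, IsAntichain (· ≤ ·) t → t.Finite) : s.IsPWO := by
  have hfin_subtype (t : Set s) (ht : IsAntichain (· ≤ ·) t) : t.Finite := by
    have himage : IsAntichain (· ≤ ·) (Subtype.val '' t) :=
      ht.image_embedding (OrderEmbedding.subtype (· ∈ s))
    exact (hfin _ (Subtype.coe_image_subset s t) himage).of_finite_image
      Subtype.val_injective.injOn
  exact (wellQuasiOrderedLE_iff.2 ⟨⟨hwf⟩, hfin_subtype⟩).wqo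

theorem isPWO_iff_isWF_and_finite_minimals [PartialOrder α] {s : Set α} :
    s.IsPWO ↔ s.IsWF ∧ ∀ t ⊆ s, {a | Minimal (· ∈ t) a}.Finite := by
  refine ⟨fun hs ↦ ⟨hs.isWF, fun t ht ↦ ?_⟩, fun ⟨hwf, hfin⟩ ↦ ?_⟩
  · have hmin : {a | Minimal (· ∈ t) a} ⊆ s := fun a ha ↦ ht ha.prop
    exact (setOfPred_minimal_antichain _).finite_of_partiallyWellOrderedOn (hs.mono hmin)
  · refine isPWO_of_isWF_of_finite_antichains hwf fun t hts ht ↦ (hfin t hts).subset ?_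
    exact fun a ha ↦ ⟨ha, fun b hb hba ↦ (ht.eq hb ha hba).ge⟩

end Order

section Topology

variable {X A : Type*} [TopologicalSpace X] {f : X → A}

theorem isClosed_preimage_of_isUpperSet [PartialOrder A]
    (hf : ∀ a, IsClosed (f ⁻¹' Set.Ici a)) (hrange : (Set.range f).IsPWO) {S : Set A}
    (hS : IsUpperSet S) : IsClosed (f ⁻¹' S) := by
  let M : Set A := {m | Minimal (· ∈ S ∩ Set.range f) m}
  have hM : M.Finite := (isPWO_iff_isWF_and_finite_minimals.1 hrange).2 _ Set.inter_subset_right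
  have hcover : f ⁻¹' S = ⋃ m ∈ M, f ⁻¹' Set.Ici m := by
    ext x
    simp only [Set.mem_preimage, Set.mem_iUnion, exists_prop, Set.mem_Ici]
    constructor
    · intro hx
      obtain ⟨m, hmx, hm⟩ :=
        (hrange.mono Set.inter_subset_right).exists_le_minimal ⟨hx, Set.mem_range_self x⟩
      exact ⟨m, hm, hmx⟩
    · rintro ⟨m, hm, hmx⟩
      exact hS hmx hm.prop.1
  rw [hcover]
  exact hM.isClosed_biUnion fun m _ ↦ hf m

theorem isOpen_preimage_of_isLowerSet [PartialOrder A]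
    (hf : ∀ a, IsClosed (f ⁻¹' Set.Ici a)) (hrange : (Set.range f).IsPWO) {S : Set A}
    (hS : IsLowerSet S) : IsOpen (f ⁻¹' S) :=
  isClosed_compl_iff.1 (isClosed_preimage_of_isUpperSet hf hrange hS.compl)

theorem isOpen_setOf_eq_of_isLeast_image [PartialOrder A] {U : Set X} {m : A}
    (hopen : IsOpen (f ⁻¹' Set.Iic m)) (hm : IsLeast (f '' U) m) : IsOpen {y : U | f y = m} := by
  have heq : {y : U | f y = m} = Subtype.val ⁻¹' (f ⁻¹' Set.Iic m) :=
    Set.ext fun y ↦ (hm.2 (Set.mem_image_of_mem f y.2)).ge_iff_eq'.symm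
  rw [heq]
  exact hopen.preimage continuous_subtype_val

theorem directedOn_ge_image_of_isPreirreducible [Preorder A]
    (hopen : ∀ a, IsOpen (f ⁻¹' Set.Iic a)) {U : Set X} (hU : IsPreirreducible U) :
    DirectedOn (· ≥ ·) (f '' U) := by
  rintro _ ⟨x, hx, rfl⟩ _ ⟨y, hy, rfl⟩
  obtain ⟨z, hz, hzx, hzy⟩ := hU _ _ (hopen (f x)) (hopen (f y)) ⟨x, hx, le_rfl⟩ ⟨y, hy, le_rfl⟩
  exact ⟨f z, Set.mem_image_of_mem f hz, hzx, hzy⟩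

theorem exists_isLeast_image_of_isIrreducible [Preorder A]
    (hopen : ∀ a, IsOpen (f ⁻¹' Set.Iic a)) {U : Set X} (hU : IsIrreducible U)
    (hwf : (f '' U).IsWF) : ∃ m, IsLeast (f '' U) m := by
  obtain ⟨m, hm⟩ := hwf.exists_minimal (hU.nonempty.image f)
  have hdir := directedOn_ge_image_of_isPreirreducible hopen hU.isPreirreducible
  exact ⟨m, hdir.minimal_iff_isLeast.1 hm⟩

end Topology

/-- Let `X` be a topological space, `A` a poset, and `f : X → A` upper
semicontinuous (preimages of principal up-sets are closed) with well partially ordered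
image (no infinite strictly descending chain in the image, and every nonempty subset of
the image has only finitely many minimal elements). Then all preimages
`f⁻¹((-∞,a))` and `f⁻¹((-∞,a])` are open; moreover, on every irreducible subset `U` of
`X` the map `f` attains a minimum `m`, and `{x ∈ U | f x = m}` is a dense open subset of
`U` in the subspace topology (so `f` is generically constant on `U` with generic
value `m`). -/
theorem statement_1 {X A : Type*} [TopologicalSpace X] [PartialOrder A] (f : X → A)
    (husc : ∀ a : A, IsClosed {x | a ≤ f x})
    (hchain : ∀ g : ℕ → A, (∀ k, g k ∈ Set.range f) → ¬ StrictAnti g)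
    (hminfin : ∀ s : Set A, s ⊆ Set.range f → s.Nonempty →
      {a ∈ s | ∀ b ∈ s, ¬ b < a}.Finite) :
    (∀ a : A, IsOpen {x | f x < a} ∧ IsOpen {x | f x ≤ a}) ∧
    ∀ U : Set X, IsIrreducible U →
      ∃ m : A, m ∈ f '' U ∧ (∀ x ∈ U, m ≤ f x) ∧
        IsOpen {y : U | f y.1 = m} ∧ Dense {y : U | f y.1 = m} := by
  have hwf : (Set.range f).IsWF :=
    Set.isWF_iff_no_descending_seq.2 fun g hg hrange ↦ hchain g hrange hg
  have hpwo : (Set.range f).IsPWO := by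
    refine isPWO_iff_isWF_and_finite_minimals.2 ⟨hwf, fun t ht ↦ ?_⟩
    obtain rfl | hne := t.eq_empty_or_nonempty
    · simp [Minimal]
    · simpa only [minimal_iff_forall_lt, imp_not_comm] using hminfin t ht hne
  have hlt (a : A) : IsOpen {x | f x < a} :=
    isOpen_preimage_of_isLowerSet husc hpwo (isLowerSet_Iio a)
  have hle (a : A) : IsOpen {x | f x ≤ a} :=
    isOpen_preimage_of_isLowerSet husc hpwo (isLowerSet_Iic a)
  refine ⟨fun a ↦ ⟨hlt a, hle a⟩, fun U hU ↦ ?_⟩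
  obtain ⟨m, hm⟩ :=
    exists_isLeast_image_of_isIrreducible hle hU (hwf.mono (Set.image_subset_range f U))
  have hopen : IsOpen {y : U | f y.1 = m} := isOpen_setOf_eq_of_isLeast_image (hle m) hm
  have hnonempty : {y : U | f y.1 = m}.Nonempty :=
    let ⟨x, hx, hxm⟩ := hm.1
    ⟨⟨x, hx⟩, hxm⟩
  have : PreirreducibleSpace U := Subtype.preirreducibleSpace hU.isPreirreducible
  exact ⟨m, hm.1, fun x hx ↦ hm.2 (Set.mem_image_of_mem f hx), hopen, hopen.dense hnonempty⟩
end

section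
/- Let Λ be a basic finite-dimensional algebra over an algebraically closed field, d a dimension vector, and C an irreducible component of Rep_d(Λ). For a finite-dimensional Λ-module M write M = ⊕_{u=1}^{s(M)} M_u with all M_u indecomposable. Then there exist a natural number s, dimension vectors d^{(1)},…,d^{(s)}, and a dense open subset U of C such that for every x ∈ U one has s(M_x) = s and the multiset of dimension vectors of the indecomposable direct summands of M_x equals {d^{(1)},…,d^{(s)}}. -/
open Finset

/-!
A subspace of the finite-dimensional module `M_x` is the range of an endomorphism of the carrier
space, so the existence of a decomposition with given dimension vectors is a first-order formula
over `K` in the coordinates of `x`; by Chevalley's theorem it defines a constructible set. The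
number of summands and their dimension vectors are bounded by `dim M_x`, hence `Rep_d(Λ)` is covered
by finitely many of these sets. One of them contains a nonempty open subset of the given irreducible
set, and such a subset is dense.
-/

section RegularFunctions

variable {K X Y Z V : Type*} [Field K] [AddCommGroup X] [Module K X] [AddCommGroup Y] [Module K Y]
  [AddCommGroup Z] [Module K Z] [AddCommGroup V] [Module K V]

variable (K X) in
/-- The algebra of regular functions on a vector space regarded as an affine space. It is
generated by the linear forms, so that no basis has to be chosen. -/
def regularFunctions : Subalgebra K (X → K) :=
  Algebra.adjoin K (Set.range fun (φ : Module.Dual K X) x => φ x)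

variable (K) in
/-- Regular maps between vector spaces regarded as affine spaces: every linear form on the
codomain pulls back to a regular function. -/
def IsRegularMap (f : X → Y) : Prop :=
  ∀ φ : Module.Dual K Y, (fun x => φ (f x)) ∈ regularFunctions K X

theorem dual_mem_regularFunctions (φ : Module.Dual K X) : (fun x => φ x) ∈ regularFunctions K X :=
  Algebra.subset_adjoin ⟨φ, rfl⟩

theorem mem_regularFunctions_pi_iff {ι : Type*} [Finite ι] {f : (ι → K) → K} :
    f ∈ regularFunctions K (ι → K) ↔
      ∃ p : MvPolynomial ι K, ∀ x, f x = MvPolynomial.eval x p := by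
  classical
  cases nonempty_fintype ι
  have adjoin_coord : regularFunctions K (ι → K) =
      Algebra.adjoin K (Set.range fun (i : ι) (x : ι → K) => x i) := by
    refine le_antisymm (Algebra.adjoin_le ?_) (Algebra.adjoin_mono ?_)
    · rintro _ ⟨φ, rfl⟩
      have expand : (fun x => φ x) =
          ∑ i, φ (Pi.single i 1) • (fun x : ι → K => x i) := by
        funext x
        conv_lhs => rw [pi_eq_sum_univ' x]
        simp [mul_comm]
      have coord_mem (i : ι) : (fun x : ι → K => x i) ∈
          Algebra.adjoin K (Set.range fun (i : ι) (x : ι → K) => x i) :=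
        Algebra.subset_adjoin ⟨i, rfl⟩
      change (fun x => φ x) ∈ Algebra.adjoin K _
      exact expand ▸ sum_mem fun i _ => Subalgebra.smul_mem _ (coord_mem i) _
    · rintro _ ⟨i, rfl⟩
      exact ⟨LinearMap.proj i, rfl⟩
  have aeval_coord (p : MvPolynomial ι K) :
      MvPolynomial.aeval (fun i (x : ι → K) => x i) p = fun x => MvPolynomial.eval x p := by
    funext x
    induction p using MvPolynomial.induction_on with
    | C r => simp
    | add p q hp hq => simp [hp, hq]
    | mul_X p i hp => simp [hp]
  simp_rw [adjoin_coord, Algebra.adjoin_range_eq_range_aeval, AlgHom.mem_range, aeval_coord,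
    funext_iff, eq_comm]

theorem comp_mem_regularFunctions {f : Y → K} (hf : f ∈ regularFunctions K Y) {g : X → Y}
    (hg : IsRegularMap K g) : (fun x => f (g x)) ∈ regularFunctions K X := by
  induction hf using Algebra.adjoin_induction with
  | mem f h => obtain ⟨φ, rfl⟩ := h; exact hg φ
  | algebraMap r => exact algebraMap_mem _ r
  | add f g _ _ hf hg => exact add_mem hf hg
  | mul f g _ _ hf hg => exact mul_mem hf hg

namespace IsRegularMap

theorem comp {f : Y → Z} (hf : IsRegularMap K f) {g : X → Y} (hg : IsRegularMap K g) :
    IsRegularMap K fun x => f (g x) :=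
  fun φ => comp_mem_regularFunctions (hf φ) hg

theorem linear (L : X →ₗ[K] Y) : IsRegularMap K fun x => L x :=
  fun φ => dual_mem_regularFunctions (φ ∘ₗ L)

theorem const (c : Y) : IsRegularMap K fun _ : X => c :=
  fun φ => algebraMap_mem _ (φ c)

theorem fst : IsRegularMap K fun x : X × Y => x.1 := linear (LinearMap.fst K X Y)

theorem snd : IsRegularMap K fun x : X × Y => x.2 := linear (LinearMap.snd K X Y)

theorem apply {ι : Type*} (i : ι) : IsRegularMap K fun x : ι → Y => x i :=
  linear (LinearMap.proj i : (ι → Y) →ₗ[K] Y)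

theorem prodMk {f : X → Y} {g : X → Z} (hf : IsRegularMap K f) (hg : IsRegularMap K g) :
    IsRegularMap K fun x => (f x, g x) := by
  intro φ
  convert add_mem (hf (φ ∘ₗ LinearMap.inl K Y Z)) (hg (φ ∘ₗ LinearMap.inr K Y Z)) using 1
  funext x
  simp [← map_add]

theorem sub {f g : X → Y} (hf : IsRegularMap K f) (hg : IsRegularMap K g) :
    IsRegularMap K fun x => f x - g x := by
  intro φ
  convert sub_mem (hf φ) (hg φ) using 1
  funext x
  simp

theorem bilinear [FiniteDimensional K Y] (B : Y →ₗ[K] Z →ₗ[K] V) {f : X → Y} {g : X → Z}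
    (hf : IsRegularMap K f) (hg : IsRegularMap K g) : IsRegularMap K fun x => B (f x) (g x) := by
  intro φ
  let b := Module.finBasis K Y
  have expand : (fun x => φ (B (f x) (g x))) =
      ∑ i, (fun x => b.coord i (f x)) * fun x => (φ ∘ₗ B (b i)) (g x) := by
    funext x
    conv_lhs => rw [← b.sum_repr (f x)]
    simp only [map_sum, map_smul, LinearMap.sum_apply, LinearMap.smul_apply, smul_eq_mul,
      LinearMap.comp_apply, Module.Basis.coord_apply, Finset.sum_apply, Pi.mul_apply]
  exact expand ▸ sum_mem fun i _ => mul_mem (hf (b.coord i)) (hg (φ ∘ₗ B (b i)))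

theorem eval [FiniteDimensional K Y] [FiniteDimensional K Z] {f : X → Y →ₗ[K] Z} {g : X → Y}
    (hf : IsRegularMap K f) (hg : IsRegularMap K g) : IsRegularMap K fun x => f x (g x) :=
  bilinear LinearMap.id hf hg

end IsRegularMap

end RegularFunctions

section ConstructiblePred

variable {K X Y : Type*} [Field K] [AddCommGroup X] [Module K X] [AddCommGroup Y] [Module K Y]

variable (K) in
/-- Constructible predicates on a vector space regarded as an affine space, i.e. the Boolean
combinations of polynomial equations. They are predicates rather than sets so that the closure
properties below mirror the shape of a formula. -/
inductive ConstructiblePred : (X → Prop) → Prop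
  | eq_zero {f : X → K} (hf : f ∈ regularFunctions K X) : ConstructiblePred fun x => f x = 0
  | not {P : X → Prop} (hP : ConstructiblePred P) : ConstructiblePred fun x => ¬P x
  | and {P R : X → Prop} (hP : ConstructiblePred P) (hR : ConstructiblePred R) :
      ConstructiblePred fun x => P x ∧ R x

namespace ConstructiblePred

theorem congr {P R : X → Prop} (hP : ConstructiblePred K P) (h : ∀ x, R x ↔ P x) :
    ConstructiblePred K R := by
  rwa [funext fun x => propext (h x)]

theorem comp {P : Y → Prop} (hP : ConstructiblePred K P) {g : X → Y} (hg : IsRegularMap K g) :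
    ConstructiblePred K fun x => P (g x) := by
  induction hP with
  | eq_zero hf => exact eq_zero (comp_mem_regularFunctions hf hg)
  | not _ ih => exact ih.not
  | and _ _ ihP ihR => exact ihP.and ihR

theorem or {P R : X → Prop} (hP : ConstructiblePred K P) (hR : ConstructiblePred K R) :
    ConstructiblePred K fun x => P x ∨ R x :=
  (hP.not.and hR.not).not.congr fun _ => or_iff_not_and_not

theorem imp {P R : X → Prop} (hP : ConstructiblePred K P) (hR : ConstructiblePred K R) :
    ConstructiblePred K fun x => P x → R x :=
  (hP.and hR.not).not.congr fun _ => not_and_not_right.symm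

theorem forall_of_finite {ι : Type*} [Finite ι] {P : ι → X → Prop}
    (hP : ∀ i, ConstructiblePred K (P i)) : ConstructiblePred K fun x => ∀ i, P i x := by
  classical
  cases nonempty_fintype ι
  suffices ∀ s : Finset ι, ConstructiblePred K fun x => ∀ i ∈ s, P i x by
    simpa using this Finset.univ
  intro s
  induction s using Finset.induction_on with
  | empty => exact (eq_zero (zero_mem _)).congr fun x => by simp
  | insert a s _ ih => exact ((hP a).and ih).congr fun x => by simp

theorem exists_of_finite {ι : Type*} [Finite ι] {P : ι → X → Prop}
    (hP : ∀ i, ConstructiblePred K (P i)) : ConstructiblePred K fun x => ∃ i, P i x :=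
  (forall_of_finite fun i => (hP i).not).not.congr fun x => by simp

theorem eq [FiniteDimensional K Y] {f g : X → Y} (hf : IsRegularMap K f)
    (hg : IsRegularMap K g) : ConstructiblePred K fun x => f x = g x := by
  let b := Module.finBasis K Y
  refine (forall_of_finite fun i => eq_zero (hf.sub hg (b.coord i))).congr fun x => ?_
  rw [← sub_eq_zero, ← b.forall_coord_eq_zero_iff]

end ConstructiblePred

end ConstructiblePred

section Chevalley

open MvPolynomial

variable {K ι κ : Type*} [Field K]

theorem mem_pointToPoint_asIdeal {x : ι → K} {p : MvPolynomial ι K} :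
    p ∈ (pointToPoint (k := K) x).asIdeal ↔ eval x p = 0 :=
  mem_vanishingIdeal_singleton_iff x p

theorem pointToPoint_injective :
    Function.Injective (pointToPoint (k := K) (K := K) (σ := ι)) := by
  intro x y h
  funext i
  have : X i - C (x i) ∈ (pointToPoint (k := K) y).asIdeal :=
    h ▸ mem_pointToPoint_asIdeal.2 (by simp)
  simpa [mem_pointToPoint_asIdeal, sub_eq_zero, eq_comm] using this

theorem isClosed_singleton_pointToPoint (x : ι → K) : IsClosed {pointToPoint (k := K) x} := by
  rw [PrimeSpectrum.isClosed_singleton_iff_isMaximal]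
  exact inferInstanceAs (vanishingIdeal K {x}).IsMaximal

theorem exists_pointToPoint_eq_of_isClosed [IsAlgClosed K] [Finite ι]
    {q : PrimeSpectrum (MvPolynomial ι K)} (hq : IsClosed {q}) :
    ∃ x : ι → K, pointToPoint x = q := by
  rw [PrimeSpectrum.isClosed_singleton_iff_isMaximal] at hq
  obtain ⟨x, hx⟩ := isMaximal_iff_eq_vanishingIdeal_singleton.1 hq
  exact ⟨x, PrimeSpectrum.ext hx.symm⟩

theorem comap_rename_pointToPoint (f : ι → κ) (z : κ → K) :
    PrimeSpectrum.comap (rename (R := K) f).toRingHom (pointToPoint z) =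
      pointToPoint (z ∘ f) := by
  ext p
  simp [PrimeSpectrum.comap_asIdeal, mem_pointToPoint_asIdeal, eval_rename]

theorem ConstructiblePred.exists_isConstructible [Finite ι] {P : (ι → K) → Prop}
    (hP : ConstructiblePred K P) : ∃ s : Set (PrimeSpectrum (MvPolynomial ι K)),
      Topology.IsConstructible s ∧ ∀ x, P x ↔ pointToPoint x ∈ s := by
  induction hP with
  | eq_zero hf =>
    obtain ⟨p, hp⟩ := mem_regularFunctions_pi_iff.1 hf
    refine ⟨(PrimeSpectrum.basicOpen p : Set _)ᶜ, PrimeSpectrum.isConstructible_basicOpen.compl,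
      fun x => ?_⟩
    simp [hp, mem_pointToPoint_asIdeal]
  | not _ ih =>
    obtain ⟨s, hs, h⟩ := ih
    exact ⟨sᶜ, hs.compl, fun x => by simp [h]⟩
  | and _ _ ihP ihR =>
    obtain ⟨s, hs, hPs⟩ := ihP
    obtain ⟨t, ht, hRt⟩ := ihR
    exact ⟨s ∩ t, hs.inter ht, fun x => by simp [hPs, hRt]⟩

theorem constructiblePred_pointToPoint_mem [Finite ι]
    {s : Set (PrimeSpectrum (MvPolynomial ι K))} (hs : Topology.IsConstructible s) :
    ConstructiblePred K fun x : ι → K => pointToPoint x ∈ s := by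
  obtain ⟨S, rfl⟩ := PrimeSpectrum.exists_constructibleSetData_iff.mpr hs
  have eval_eq_zero (p : MvPolynomial ι K) : ConstructiblePred K fun x : ι → K => eval x p = 0 :=
    .eq_zero (mem_regularFunctions_pi_iff.2 ⟨p, fun _ => rfl⟩)
  have hS : ConstructiblePred K fun x : ι → K =>
      ∃ B : S, (∀ i, eval x (B.1.g i) = 0) ∧ ¬eval x B.1.f = 0 :=
    .exists_of_finite fun B => .and (.forall_of_finite fun i => eval_eq_zero _)
      (eval_eq_zero _).not
  refine hS.congr fun x => ?_
  simp [PrimeSpectrum.ConstructibleSetData.toSet, PrimeSpectrum.BasicConstructibleSetData.toSet,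
    PrimeSpectrum.mem_zeroLocus, Set.range_subset_iff, mem_pointToPoint_asIdeal]

theorem exists_isClosed_singleton_of_isConstructible {A : Type*} [CommRing A] [IsJacobsonRing A]
    {s : Set (PrimeSpectrum A)} (hs : Topology.IsConstructible s) (hne : s.Nonempty) :
    ∃ q ∈ s, IsClosed {q} := by
  obtain ⟨S, rfl⟩ := PrimeSpectrum.exists_constructibleSetData_iff.mpr hs
  obtain ⟨B, hB, hBne⟩ : ∃ B ∈ S, B.toSet.Nonempty := by
    simpa [PrimeSpectrum.ConstructibleSetData.toSet, Set.nonempty_biUnion] using hne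
  have locallyClosed : IsLocallyClosed B.toSet :=
    (PrimeSpectrum.isClosed_zeroLocus _).isLocallyClosed.inter
      (PrimeSpectrum.isClosed_zeroLocus _).isOpen_compl.isLocallyClosed
  obtain ⟨q, hqB, hq⟩ := nonempty_inter_closedPoints hBne locallyClosed
  exact ⟨q, Set.mem_biUnion hB hqB, hq⟩

theorem finitePresentation_of_finiteType {R A B : Type*} [CommRing R] [CommRing A] [CommRing B]
    [IsNoetherianRing A] [Algebra R A] [Algebra R B] [Algebra.FiniteType R B] (f : A →ₐ[R] B) :
    f.toRingHom.FinitePresentation := by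
  refine RingHom.FinitePresentation.of_finiteType.1
    (RingHom.FiniteType.of_comp_finiteType (f := algebraMap R A) ?_)
  rw [AlgHom.toRingHom_eq_coe, AlgHom.comp_algebraMap]
  exact RingHom.finiteType_algebraMap.2 inferInstance

theorem ConstructiblePred.exists_comp_eq [IsAlgClosed K] [Finite ι] [Finite κ] (f : ι → κ)
    {P : (κ → K) → Prop} (hP : ConstructiblePred K P) :
    ConstructiblePred K fun x : ι → K => ∃ z, z ∘ f = x ∧ P z := by
  obtain ⟨s, hs, hPs⟩ := hP.exists_isConstructible
  let φ := (rename (R := K) f).toRingHom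
  refine (constructiblePred_pointToPoint_mem <| PrimeSpectrum.isConstructible_comap_image
    (finitePresentation_of_finiteType (rename (R := K) f)) hs).congr fun x => ⟨?_, fun hx => ?_⟩
  · rintro ⟨z, rfl, hz⟩
    exact ⟨_, (hPs z).1 hz, comap_rename_pointToPoint f z⟩
  · -- Chevalley only gives a prime of `s` above `x`. The fiber of `s` is constructible, so it also
    -- contains a closed point, which is `K`-rational by the Nullstellensatz.
    let fiber := PrimeSpectrum.comap φ ⁻¹' {pointToPoint x}
    have fiber_closed : IsClosed fiber :=
      (isClosed_singleton_pointToPoint x).preimage (PrimeSpectrum.continuous_comap φ)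
    have fiber_constructible : Topology.IsConstructible fiber :=
      ((TopologicalSpace.NoetherianSpace.isCompact _).isConstructible
        fiber_closed.isOpen_compl).of_compl
    obtain ⟨q, ⟨hqs, hqx⟩, hq⟩ :=
      exists_isClosed_singleton_of_isConstructible (hs.inter fiber_constructible) hx
    obtain ⟨z, rfl⟩ := exists_pointToPoint_eq_of_isClosed hq
    exact ⟨z, pointToPoint_injective ((comap_rename_pointToPoint f z).symm.trans hqx),
      (hPs z).2 hqs⟩

end Chevalley

section Quantifiers

variable {K X Y V : Type*} [Field K] [AddCommGroup X] [Module K X] [AddCommGroup Y] [Module K Y]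
  [AddCommGroup V] [Module K V]

theorem surjective_linearMap_range : Function.Surjective
    (LinearMap.range : (V →ₗ[K] V) → Submodule K V) := by
  intro N
  obtain ⟨N', h⟩ := N.exists_isCompl
  exact ⟨_, Submodule.range_projection h⟩

variable [IsAlgClosed K] [FiniteDimensional K X] [FiniteDimensional K Y] [FiniteDimensional K V]

namespace ConstructiblePred

theorem exists_snd {P : X → Y → Prop} (hP : ConstructiblePred K fun z : X × Y => P z.1 z.2) :
    ConstructiblePred K fun x => ∃ y, P x y := by
  let bX := Module.finBasis K X
  let bY := Module.finBasis K Y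
  let e : (Fin (Module.finrank K X) ⊕ Fin (Module.finrank K Y) → K) ≃ₗ[K] X × Y :=
    (LinearEquiv.sumArrowLequivProdArrow _ _ K K).trans
      (bX.equivFun.symm.prodCongr bY.equivFun.symm)
  have e_apply (z) : e z = (bX.equivFun.symm (z ∘ Sum.inl), bY.equivFun.symm (z ∘ Sum.inr)) := rfl
  have in_coordinates := ((hP.comp (IsRegularMap.linear e.toLinearMap)).exists_comp_eq Sum.inl).comp
    (IsRegularMap.linear bX.equivFun.toLinearMap)
  refine in_coordinates.congr fun x => ⟨?_, ?_⟩
  · rintro ⟨y, hy⟩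
    refine ⟨Sum.elim (bX.equivFun x) (bY.equivFun y), Sum.elim_comp_inl _ _, ?_⟩
    change P (e _).1 (e _).2
    simpa only [e_apply, Sum.elim_comp_inl, Sum.elim_comp_inr, LinearEquiv.symm_apply_apply]
  · rintro ⟨z, hz, hPz⟩
    have fst_eq : (e z).1 = x := by
      rw [e_apply, hz]
      exact bX.equivFun.symm_apply_apply x
    exact ⟨(e z).2, fst_eq ▸ hPz⟩

theorem forall_snd {P : X → Y → Prop} (hP : ConstructiblePred K fun z : X × Y => P z.1 z.2) :
    ConstructiblePred K fun x => ∀ y, P x y :=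
  (exists_snd (P := fun x y => ¬P x y) hP.not).not.congr fun _ => by simp

theorem forall_submodule {P : X → Submodule K V → Prop}
    (hP : ConstructiblePred K fun z : X × (V →ₗ[K] V) => P z.1 (LinearMap.range z.2)) :
    ConstructiblePred K fun x => ∀ N, P x N :=
  (forall_snd (P := fun x E => P x (LinearMap.range E)) hP).congr fun _ =>
    surjective_linearMap_range.forall

theorem exists_submodules {ι : Type*} [Finite ι] {P : X → (ι → Submodule K V) → Prop}
    (hP : ConstructiblePred K
      fun z : X × (ι → (V →ₗ[K] V)) => P z.1 fun i => LinearMap.range (z.2 i)) :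
    ConstructiblePred K fun x => ∃ N, P x N :=
  (exists_snd (P := fun x (E : ι → V →ₗ[K] V) => P x fun i => LinearMap.range (E i)) hP).congr
    fun _ => surjective_linearMap_range.comp_left.exists

end ConstructiblePred

end Quantifiers

section ConstructibleFamily

variable {K X Y V V' : Type*} [Field K] [AddCommGroup X] [Module K X] [AddCommGroup Y] [Module K Y]
  [AddCommGroup V] [Module K V] [AddCommGroup V'] [Module K V']

variable (K) in
/-- Families of subspaces of `V` parametrized by the affine space `X` whose total space
`{(x, v) | v ∈ N x}` is constructible. -/
def ConstructibleFamily (N : X → Submodule K V) : Prop :=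
  ConstructiblePred K fun z : X × V => z.2 ∈ N z.1

theorem finrank_le_iff_exists_le_range [FiniteDimensional K V] (N : Submodule K V) (k : ℕ) :
    Module.finrank K N ≤ k ↔ ∃ L : (Fin k → K) →ₗ[K] V, N ≤ LinearMap.range L := by
  refine ⟨fun h => ?_, fun ⟨L, hL⟩ => ?_⟩
  · obtain ⟨f, hf⟩ : ∃ f : N →ₗ[K] (Fin k → K), Function.Injective f :=
      finrank_le_iff_exists_linearMap.1 (by simpa using h)
    obtain ⟨g, hg⟩ := f.exists_leftInverse_of_injective (LinearMap.ker_eq_bot.2 hf)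
    exact ⟨N.subtype ∘ₗ g, fun v hv =>
      ⟨f ⟨v, hv⟩, congrArg N.subtype (LinearMap.congr_fun hg ⟨v, hv⟩)⟩⟩
  · calc Module.finrank K N ≤ Module.finrank K (LinearMap.range L) := Submodule.finrank_mono hL
      _ ≤ Module.finrank K (Fin k → K) := LinearMap.finrank_range_le L
      _ = k := Module.finrank_fin_fun K

namespace ConstructibleFamily

theorem mem {N : X → Submodule K V} (hN : ConstructibleFamily K N) {f : Y → V} {g : Y → X}
    (hf : IsRegularMap K f) (hg : IsRegularMap K g) :
    ConstructiblePred K fun y => f y ∈ N (g y) :=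
  ConstructiblePred.comp hN (hg.prodMk hf)

theorem comp {N : X → Submodule K V} (hN : ConstructibleFamily K N) {g : Y → X}
    (hg : IsRegularMap K g) : ConstructibleFamily K fun y => N (g y) :=
  hN.mem .snd (hg.comp .fst)

theorem const [FiniteDimensional K V] (N : Submodule K V) :
    ConstructibleFamily K fun _ : X => N :=
  (ConstructiblePred.eq ((IsRegularMap.linear N.mkQ).comp .snd) (.const 0)).congr fun _ => by simp

theorem inf {N M : X → Submodule K V} (hN : ConstructibleFamily K N)
    (hM : ConstructibleFamily K M) : ConstructibleFamily K fun x => N x ⊓ M x :=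
  ConstructiblePred.and hN hM

variable [IsAlgClosed K] [FiniteDimensional K X] [FiniteDimensional K V]

theorem le {N M : X → Submodule K V} (hN : ConstructibleFamily K N)
    (hM : ConstructibleFamily K M) : ConstructiblePred K fun x => N x ≤ M x :=
  ConstructiblePred.forall_snd (P := fun x v => v ∈ N x → v ∈ M x) (.imp hN hM)

theorem eq {N M : X → Submodule K V} (hN : ConstructibleFamily K N)
    (hM : ConstructibleFamily K M) : ConstructiblePred K fun x => N x = M x :=
  ((hN.le hM).and (hM.le hN)).congr fun _ => le_antisymm_iff

theorem map [FiniteDimensional K V'] {N : X → Submodule K V} (hN : ConstructibleFamily K N)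
    {f : X → V →ₗ[K] V'} (hf : IsRegularMap K f) :
    ConstructibleFamily K fun x => (N x).map (f x) :=
  ConstructiblePred.exists_snd (P := fun (z : X × V') v => v ∈ N z.1 ∧ f z.1 v = z.2)
    (.and (hN.mem .snd (.comp .fst .fst)) (.eq (.eval (hf.comp (.comp .fst .fst)) .snd)
      (.comp .snd .fst)))

theorem range [FiniteDimensional K V'] {f : X → V →ₗ[K] V'} (hf : IsRegularMap K f) :
    ConstructibleFamily K fun x => LinearMap.range (f x) := by
  simpa only [LinearMap.range_eq_map] using (const ⊤).map hf

theorem sup {N M : X → Submodule K V} (hN : ConstructibleFamily K N)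
    (hM : ConstructibleFamily K M) : ConstructibleFamily K fun x => N x ⊔ M x := by
  have exists_sub_mem : ConstructiblePred K fun z : X × V => ∃ v, v ∈ N z.1 ∧ z.2 - v ∈ M z.1 :=
    .exists_snd (P := fun (z : X × V) v => v ∈ N z.1 ∧ z.2 - v ∈ M z.1)
      (.and (hN.mem .snd (.comp .fst .fst))
        (hM.mem (.sub (.comp .snd .fst) .snd) (.comp .fst .fst)))
  refine exists_sub_mem.congr fun z => ?_
  simp only [Submodule.mem_sup, ← eq_sub_iff_add_eq', exists_eq_right]

theorem iSup {ι : Sort*} [Finite ι] {N : ι → X → Submodule K V}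
    (hN : ∀ i, ConstructibleFamily K (N i)) : ConstructibleFamily K fun x => ⨆ i, N i x := by
  classical
  cases nonempty_fintype (PLift ι)
  suffices ∀ s : Finset (PLift ι), ConstructibleFamily K fun x => s.sup fun i => N i.down x by
    convert this Finset.univ with x
    rw [Finset.sup_univ_eq_iSup]
    exact (iSup_plift_down fun i => N i x).symm
  intro s
  induction s using Finset.induction_on with
  | empty => exact const ⊥
  | insert a s _ ih => simpa only [Finset.sup_insert] using (hN a.down).sup ih

theorem finrank_le {N : X → Submodule K V} (hN : ConstructibleFamily K N) (k : ℕ) :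
    ConstructiblePred K fun x => Module.finrank K (N x) ≤ k :=
  (ConstructiblePred.exists_snd (P := fun x (L : (Fin k → K) →ₗ[K] V) => N x ≤ LinearMap.range L)
    ((hN.comp .fst).le (range .snd))).congr fun x => finrank_le_iff_exists_le_range (N x) k

theorem finrank_eq {N : X → Submodule K V} (hN : ConstructibleFamily K N) (k : ℕ) :
    ConstructiblePred K fun x => Module.finrank K (N x) = k := by
  refine ((hN.finrank_le k).and
    (.forall_of_finite fun j : Fin k => (hN.finrank_le j).not)).congr fun x => ?_
  simp only [Fin.forall_iff, not_le, forall_lt_iff_le, le_antisymm_iff]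

end ConstructibleFamily

end ConstructibleFamily

section Genericity

variable {K X T : Type*} [Field K] [AddCommGroup X] [Module K X] [TopologicalSpace T]

theorem ConstructiblePred.exists_isOpen_forall_or_forall_not {P : X → Prop}
    (hP : ConstructiblePred K P) {j : T → X}
    (hj : ∀ f ∈ regularFunctions K X, IsOpen {t | f (j t) ≠ 0}) {C : Set T}
    (hC : IsIrreducible C) :
    ∃ W, IsOpen W ∧ (C ∩ W).Nonempty ∧
      ((∀ t ∈ C ∩ W, P (j t)) ∨ ∀ t ∈ C ∩ W, ¬P (j t)) := by
  induction hP with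
  | @eq_zero f hf =>
    by_cases vanishing : ∀ t ∈ C, f (j t) = 0
    · exact ⟨Set.univ, isOpen_univ, by simpa using hC.nonempty, .inl fun t ht => vanishing t ht.1⟩
    · push Not at vanishing
      exact ⟨_, hj _ hf, vanishing, .inr fun t ht => ht.2⟩
  | not _ ih =>
    obtain ⟨W, hW, hne, h⟩ := ih
    exact ⟨W, hW, hne, h.symm.imp_right fun h t ht => not_not.2 (h t ht)⟩
  | and _ _ ihP ihR =>
    obtain ⟨W, hW, hWC, hP⟩ := ihP
    obtain ⟨W', hW', hWC', hR⟩ := ihR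
    refine ⟨W ∩ W', hW.inter hW', hC.2 W W' hW hW' hWC hWC', ?_⟩
    rcases hP with hP | hP
    · rcases hR with hR | hR
      · exact .inl fun t ht => ⟨hP t ⟨ht.1, ht.2.1⟩, hR t ⟨ht.1, ht.2.2⟩⟩
      · exact .inr fun t ht h => hR t ⟨ht.1, ht.2.2⟩ h.2
    · exact .inr fun t ht h => hP t ⟨ht.1, ht.2.1⟩ h.1

theorem ConstructiblePred.exists_isOpen_forall_of_forall_exists {ι : Type*} [Finite ι]
    {P : ι → X → Prop} (hP : ∀ i, ConstructiblePred K (P i)) {j : T → X}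
    (hj : ∀ f ∈ regularFunctions K X, IsOpen {t | f (j t) ≠ 0}) {C : Set T}
    (hC : IsIrreducible C) (cover : ∀ t ∈ C, ∃ i, P i (j t)) :
    ∃ i W, IsOpen W ∧ (C ∩ W).Nonempty ∧ ∀ t ∈ C ∩ W, P i (j t) := by
  classical
  cases nonempty_fintype ι
  choose W hW hne dichotomy using fun i => (hP i).exists_isOpen_forall_or_forall_not hj hC
  obtain ⟨t, htC, htW⟩ : (C ∩ ⋂₀ ↑(Finset.univ.image W)).Nonempty :=
    isIrreducible_iff_sInter.1 hC _ (by simpa using hW) (by simpa using hne)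
  obtain ⟨i, hi⟩ := cover t htC
  have htWi : t ∈ W i := htW _ (by simp)
  exact ⟨i, W i, hW i, hne i, (dichotomy i).resolve_right fun h => h t ⟨htC, htWi⟩ hi⟩

end Genericity

theorem exists_supIndep_indecomposable {α : Type*} [Lattice α] [IsModularLattice α] [OrderBot α]
    [WellFoundedLT α] {p : α → Prop} (a : α) (ha : p a) :
    ∃ S : Finset α, S.SupIndep id ∧ S.sup id = a ∧ ∀ b ∈ S, p b ∧ b ≠ ⊥ ∧
      ∀ b₁ b₂, p b₁ → p b₂ → b₁ ≤ b → b₂ ≤ b → b₁ ⊔ b₂ = b → b₁ ⊓ b₂ = ⊥ →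
        b₁ = ⊥ ∨ b₂ = ⊥ := by
  classical
  induction a using WellFoundedLT.induction with
  | ind a ih =>
  rcases eq_or_ne a ⊥ with rfl | ha₀
  · exact ⟨∅, Finset.supIndep_empty _, rfl, by simp⟩
  by_cases indec : ∀ b₁ b₂, p b₁ → p b₂ → b₁ ≤ a → b₂ ≤ a → b₁ ⊔ b₂ = a → b₁ ⊓ b₂ = ⊥ →
      b₁ = ⊥ ∨ b₂ = ⊥
  · exact ⟨{a}, Finset.supIndep_singleton _ _, by simp, by simpa using ⟨ha, ha₀, indec⟩⟩
  push Not at indec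
  obtain ⟨b₁, b₂, hb₁, hb₂, hle₁, hle₂, hsup, hinf, hne₁, hne₂⟩ := indec
  have hlt₁ : b₁ < a := hle₁.lt_of_ne <| by
    rintro rfl
    exact hne₂ (by rwa [inf_eq_right.2 hle₂] at hinf)
  have hlt₂ : b₂ < a := hle₂.lt_of_ne <| by
    rintro rfl
    exact hne₁ (by rwa [inf_eq_left.2 hle₁] at hinf)
  obtain ⟨S₁, indep₁, sup₁, hS₁⟩ := ih b₁ hlt₁ hb₁
  obtain ⟨S₂, indep₂, sup₂, hS₂⟩ := ih b₂ hlt₂ hb₂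
  refine ⟨S₁ ∪ S₂, indep₁.union indep₂ (by rwa [sup₁, sup₂, disjoint_iff]), ?_, fun b hb => ?_⟩
  · rw [Finset.sup_union, sup₁, sup₂, hsup]
  · exact (Finset.mem_union.1 hb).elim (hS₁ b) (hS₂ b)

namespace QuiverData

variable {K : Type} [Field K] {Q : QuiverData} {d : Fin Q.n → ℕ}

theorem isRegularMap_arrowMap (a : Fin Q.numArrows) :
    IsRegularMap K fun x : RepSpace Q d K => arrowMap Q d K x a := by
  let L : RepSpace Q d K →ₗ[K] Carrier Q d K →ₗ[K] Carrier Q d K :=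
    { toFun := fun x => arrowMap Q d K x a
      map_add' := fun x y => by
        ext m jv
        by_cases h : jv.1 = Q.tgt a <;> simp [arrowMap, h, add_mul, Finset.sum_add_distrib]
      map_smul' := fun c x => by
        ext m jv
        by_cases h : jv.1 = Q.tgt a <;> simp [arrowMap, h, Finset.mul_sum, mul_assoc] }
  exact .linear L

theorem exists_decompWith (x : RepSpace Q d K) :
    ∃ (s : Fin (Module.finrank K (Carrier Q d K) + 1))
      (D : Fin s → Fin Q.n → Fin (Module.finrank K (Carrier Q d K) + 1)),
      DecompWith Q d K x s fun r i => D r i := by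
  obtain ⟨S, indep, sup_eq, hS⟩ := exists_supIndep_indecomposable (p := Stable Q d K x) ⊤
    ⟨fun _ => le_top, fun _ => le_top⟩
  let N : Fin S.card → Submodule K (Carrier Q d K) := fun r => S.equivFin.symm r
  have hN (r) : Stable Q d K x (N r) ∧ IndecompSub Q d K x (N r) := hS _ (S.equivFin.symm r).2
  have iSupIndep_N : iSupIndep N :=
    (iSupIndep_comp_coe_iff_supIndep.2 indep).comp S.equivFin.symm.injective
  have card_le : S.card ≤ Module.finrank K (Carrier Q d K) := by
    simpa [fun r => (hN r).2.1] using iSupIndep_N.subtype_ne_bot_le_finrank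
  have iSup_N : ⨆ r, N r = ⊤ := by
    rw [← sup_eq, Finset.sup_eq_iSup, iSup_subtype']
    exact S.equivFin.symm.iSup_comp (g := fun M : S => M.1)
  exact ⟨⟨S.card, Nat.lt_succ_of_le card_le⟩,
    fun r i => ⟨vdim Q d K (N r) i, Nat.lt_succ_of_le (Submodule.finrank_le _)⟩,
    N, fun r => (hN r).1, iSupIndep_N, iSup_N, fun r => (hN r).2, fun _ _ => rfl⟩

variable [IsAlgClosed K] {X : Type*} [AddCommGroup X] [Module K X] [FiniteDimensional K X]

theorem constructiblePred_stable {g : X → RepSpace Q d K} (hg : IsRegularMap K g)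
    {N : X → Submodule K (Carrier Q d K)} (hN : ConstructibleFamily K N) :
    ConstructiblePred K fun x => Stable Q d K (g x) (N x) :=
  .and (.forall_of_finite fun a => (hN.map ((isRegularMap_arrowMap a).comp hg)).le hN)
    (.forall_of_finite fun _ => (hN.map (.const _)).le hN)

theorem constructiblePred_indecompSub {g : X → RepSpace Q d K} (hg : IsRegularMap K g)
    {N : X → Submodule K (Carrier Q d K)} (hN : ConstructibleFamily K N) :
    ConstructiblePred K fun x => IndecompSub Q d K (g x) (N x) := by
  refine (hN.eq (.const ⊥)).not.and (.forall_submodule (.forall_submodule ?_))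
  let X' := (X × Module.End K (Carrier Q d K)) × Module.End K (Carrier Q d K)
  have hN₁ : ConstructibleFamily K fun z : X' => LinearMap.range z.1.2 := .range (.comp .snd .fst)
  have hN₂ : ConstructibleFamily K fun z : X' => LinearMap.range z.2 := .range .snd
  have hg' : IsRegularMap K fun z : X' => g z.1.1 := hg.comp (.comp .fst .fst)
  have hN' : ConstructibleFamily K fun z : X' => N z.1.1 := hN.comp (.comp .fst .fst)
  exact (constructiblePred_stable hg' hN₁).imp <| (constructiblePred_stable hg' hN₂).imp <|
    (hN₁.le hN').imp <| (hN₂.le hN').imp <| ((hN₁.sup hN₂).eq hN').imp <|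
    ((hN₁.inf hN₂).eq (.const ⊥)).imp <| (hN₁.eq (.const ⊥)).or (hN₂.eq (.const ⊥))

theorem constructiblePred_decompWith (s : ℕ) (D : Fin s → Fin Q.n → ℕ) :
    ConstructiblePred K fun x : RepSpace Q d K => DecompWith Q d K x s D := by
  refine .exists_submodules ?_
  have hN (r) : ConstructibleFamily K
      fun z : RepSpace Q d K × (Fin s → Module.End K (Carrier Q d K)) => LinearMap.range (z.2 r) :=
    .range ((IsRegularMap.apply r).comp .snd)
  have disjoint (r) := ((hN r).inf (.iSup fun t => .iSup fun _ : t ≠ r => hN t)).eq (.const ⊥)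
  exact .and (.forall_of_finite fun r => constructiblePred_stable .fst (hN r)) <|
    .and (.forall_of_finite fun r => (disjoint r).congr fun _ => disjoint_iff) <|
    .and ((ConstructibleFamily.iSup hN).eq (.const ⊤)) <|
    .and (.forall_of_finite fun r => constructiblePred_indecompSub .fst (hN r)) <|
    .forall_of_finite fun r => .forall_of_finite fun i => ((hN r).map (.const _)).finrank_eq (D r i)

end QuiverData

open Topology in
theorem isOpen_zariskiTopology_ne_zero {ι K : Type} [Field K] [Finite ι] {f : (ι → K) → K}
    (hf : f ∈ regularFunctions K (ι → K)) : IsOpen[zariskiTopology ι K] {x | f x ≠ 0} := by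
  obtain ⟨p, hp⟩ := mem_regularFunctions_pi_iff.1 hf
  exact TopologicalSpace.isOpen_generateFrom_of_mem ⟨p, by simp only [hp]⟩

open QuiverData in
theorem statement_2_general (K : Type) [Field K] [IsAlgClosed K] (Q : QuiverData)
    (d : Fin Q.n → ℕ) {T : Type*} [TopologicalSpace T] {M : T → RepSpace Q d K}
    (hM : Continuous M) {C : Set T} (hC : IsIrreducible C) :
    ∃ (s : ℕ) (D : Fin s → Fin Q.n → ℕ) (U : Set T),
      U ⊆ C ∧ (∃ W, IsOpen W ∧ U = C ∩ W) ∧ C ⊆ closure U ∧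
      ∀ t ∈ U, DecompWith Q d K (M t) s D := by
  let k := Module.finrank K (Carrier Q d K) + 1
  obtain ⟨⟨s, D⟩, W, hW, hne, hdecomp⟩ :=
    ConstructiblePred.exists_isOpen_forall_of_forall_exists
      (P := fun (i : Σ s : Fin k, Fin s → Fin Q.n → Fin k) x =>
        DecompWith Q d K x i.1 fun r v => i.2 r v)
      (fun _ => constructiblePred_decompWith _ _)
      (fun _ hf => (isOpen_zariskiTopology_ne_zero hf).preimage hM) hC
      (fun t _ => Sigma.exists.2 (exists_decompWith (M t)))
  exact ⟨s, fun r v => D r v, C ∩ W, Set.inter_subset_left, ⟨W, hW, rfl⟩,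
    subset_closure_inter_of_isPreirreducible_of_isOpen hC.2 hW hne, hdecomp⟩

open QuiverData in
/-- On every irreducible component `C` of `Rep_d(Λ)`, the number of
indecomposable direct summands and the multiset of their dimension vectors are
generically constant: there are `s`, dimension vectors `D 0, …, D (s-1)`, and a dense
open subset `U` of `C` such that for every `x ∈ U` the module `M_x` decomposes into
exactly `s` indecomposable summands with dimension vectors `D 0, …, D (s-1)`. -/
theorem statement_2 (K : Type) [Field K] [IsAlgClosed K]
    (Q : QuiverData) (d : Fin Q.n → ℕ)
    (Rels : Set (FreeAlgebra K (Fin Q.n ⊕ Fin Q.numArrows)))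
    (C : Set (GenV Q d K Rels))
    (hC : C ∈ irreducibleComponents (GenV Q d K Rels)) :
    ∃ (s : ℕ) (D : Fin s → Fin Q.n → ℕ) (U : Set (GenV Q d K Rels)),
      U ⊆ C ∧ (∃ W, IsOpen W ∧ U = C ∩ W) ∧ C ⊆ closure U ∧
      ∀ x ∈ U, DecompWith Q d K x.1 s D :=
  statement_2_general K Q d continuous_subtype_val hC.prop
end
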